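/- arXiv:1810.01315 — 2 statements merged into one kernel-verified Lean document; each statement's English description precedes it below -/
import Mathlib

section
/- A map 𝔬 : 𝕆 → 𝕆 is an order-reversing homeomorphism of the lexicographically ordered square if and only if there exist an order-reversing homeomorphism θ : I → I and a family (μ_s)_{s ∈ I} of order-reversing homeomorphisms μ_s : I → I such that 𝔬(s,t) = (θ(s), μ_s(t)) for all (s,t) ∈ I × I. -/
open Set

/-- The unit interval `[0,1]`. -/
local notation "𝕀" => unitInterval

/-- The lexicographic order on `[0,1] × [0,1]`:
`(x,y) ≤ (s,t)` iff `x < s`, or `x = s` and `y ≤ t`. -/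
def lexLE (p q : 𝕀 × 𝕀) : Prop := p.1 < q.1 ∨ (p.1 = q.1 ∧ p.2 ≤ q.2)

/-- The strict lexicographic order on `[0,1] × [0,1]`. -/
def lexLT (p q : 𝕀 × 𝕀) : Prop := p.1 < q.1 ∨ (p.1 = q.1 ∧ p.2 < q.2)

/-- The order topology of the lexicographic order on `[0,1] × [0,1]`, generated by the
open rays. -/
def lexTop : TopologicalSpace (𝕀 × 𝕀) :=
  TopologicalSpace.generateFrom
    ({S | ∃ a, S = {x | lexLT a x}} ∪ {S | ∃ a, S = {x | lexLT x a}})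

/-!
An order isomorphism between lexicographic products carries each vertical fibre into a vertical
fibre. Indeed, along a fibre the first coordinate of the image is monotone; if it jumped from `a` to
`b`, the image would contain the whole fibres over all points of `(a, b)`, so the monotone function
would take each of these uncountably many values at least twice, which is impossible on a
second countable domain. Applied to the inverse as well, this makes the isomorphism a shear
`(s, t) ↦ (θ s, μ s t)`. Order-reversing maps are isomorphisms onto the order dual, and in order
topologies all these isomorphisms are homeomorphisms.
-/

variable {α β γ δ X Y : Type*}

section OrderDual

/-- An order-reversing bijection, as an order isomorphism onto the order dual. -/
noncomputable def orderIsoDualOfAntitone [LinearOrder X] [PartialOrder Y] (e : X ≃ Y)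
    (he : Antitone e) : X ≃o Yᵒᵈ :=
  StrictMono.orderIsoOfSurjective (OrderDual.toDual ∘ e)
    (he.strictAnti_of_injective e.injective).dual_right
    (OrderDual.toDual.surjective.comp e.surjective)

@[simp]
theorem orderIsoDualOfAntitone_apply [LinearOrder X] [PartialOrder Y] (e : X ≃ Y)
    (he : Antitone e) (x : X) : orderIsoDualOfAntitone e he x = OrderDual.toDual (e x) :=
  rfl

/-- The order dual of a lexicographic product is the lexicographic product of the order duals. -/
def lexProdDual (α β : Type*) [Preorder α] [Preorder β] : (α ×ₗ β)ᵒᵈ ≃o αᵒᵈ ×ₗ βᵒᵈ where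
  toFun p := toLex ((ofLex (OrderDual.ofDual p)).map OrderDual.toDual OrderDual.toDual)
  invFun p := OrderDual.toDual (toLex ((ofLex p).map OrderDual.ofDual OrderDual.ofDual))
  left_inv _ := rfl
  right_inv _ := rfl
  map_rel_iff' {p q} := by
    rw [← OrderDual.ofDual_le_ofDual, Prod.Lex.le_iff, Prod.Lex.le_iff, eq_comm]
    rfl

@[simp]
theorem lexProdDual_symm_apply [Preorder α] [Preorder β] (s : αᵒᵈ) (t : βᵒᵈ) :
    (lexProdDual α β).symm (toLex (s, t)) =
      OrderDual.toDual (toLex (OrderDual.ofDual s, OrderDual.ofDual t)) :=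
  rfl

variable [Preorder X] [Preorder Y] [TopologicalSpace X] [OrderTopology X] [TopologicalSpace Y]
  [OrderTopology Y]

/-- The order-reversing homeomorphism underlying an order isomorphism onto the order dual. -/
def homeomorphOfOrderIsoDual (e : X ≃o Yᵒᵈ) : X ≃ₜ Y :=
  e.toHomeomorph.trans ⟨OrderDual.ofDual, continuous_ofDual, continuous_toDual⟩

@[simp]
theorem homeomorphOfOrderIsoDual_apply (e : X ≃o Yᵒᵈ) (x : X) :
    homeomorphOfOrderIsoDual e x = OrderDual.ofDual (e x) :=
  rfl

theorem antitone_homeomorphOfOrderIsoDual (e : X ≃o Yᵒᵈ) :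
    Antitone (homeomorphOfOrderIsoDual e) :=
  e.monotone.dual_right

end OrderDual

section Shear

/-- The order isomorphism `(s, t) ↦ (θ s, μ s t)` of lexicographic products; `Equiv.prodShear` is
the underlying bijection. -/
def lexShear [Preorder α] [Preorder β] [Preorder γ] [Preorder δ] (θ : α ≃o γ) (μ : α → β ≃o δ) :
    α ×ₗ β ≃o γ ×ₗ δ where
  toEquiv := ofLex.trans ((θ.toEquiv.prodShear fun s => (μ s).toEquiv).trans toLex)
  map_rel_iff' {p q} := by
    simpa [Prod.Lex.le_iff] using
      or_congr_right (and_congr_right fun h : (ofLex p).1 = (ofLex q).1 => by simp [h])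

@[simp]
theorem lexShear_apply [Preorder α] [Preorder β] [Preorder γ] [Preorder δ] (θ : α ≃o γ)
    (μ : α → β ≃o δ) (s : α) (t : β) : lexShear θ μ (toLex (s, t)) = toLex (θ s, μ s t) :=
  rfl

variable [LinearOrder α] [LinearOrder β] [PartialOrder γ] [PartialOrder δ]

theorem exists_eq_lexShear_of_fst_eq_iff [Nonempty β] [Nonempty δ] (e : α ×ₗ β ≃o γ ×ₗ δ)
    (he : ∀ p q, (ofLex (e p)).1 = (ofLex (e q)).1 ↔ (ofLex p).1 = (ofLex q).1) :
    ∃ (θ : α ≃o γ) (μ : α → β ≃o δ), e = lexShear θ μ := by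
  obtain ⟨t₀⟩ := ‹Nonempty β›
  obtain ⟨v₀⟩ := ‹Nonempty δ›
  let θ : α → γ := fun s => (ofLex (e (toLex (s, t₀)))).1
  let μ : α → β → δ := fun s t => (ofLex (e (toLex (s, t)))).2
  have apply_eq (s t) : e (toLex (s, t)) = toLex (θ s, μ s t) :=
    congrArg toLex (Prod.ext ((he _ _).2 rfl) rfl)
  have θ_injective : θ.Injective := fun s s' h => (he _ _).1 h
  have θ_strictMono : StrictMono θ :=
    Monotone.strictMono_of_injective (fun s s' h =>
      Prod.Lex.monotone_fst_ofLex (e.monotone (Prod.Lex.toLex_mono ⟨h, le_rfl⟩))) θ_injective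
  have θ_surjective : θ.Surjective := fun u => by
    obtain ⟨⟨s, t⟩, h⟩ := e.surjective (toLex (u, v₀))
    exact ⟨s, congrArg (fun p => (ofLex p).1) ((apply_eq s t).symm.trans h)⟩
  have μ_strictMono (s) : StrictMono (μ s) := fun t t' h => by
    have hlt : toLex (s, t) < toLex (s, t') := Prod.Lex.toLex_lt_toLex.2 (.inr ⟨rfl, h⟩)
    simpa [← e.lt_iff_lt, apply_eq, Prod.Lex.toLex_lt_toLex] using hlt
  have μ_surjective (s) : (μ s).Surjective := fun v => by
    obtain ⟨⟨s', t⟩, h⟩ := e.surjective (toLex (θ s, v))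
    obtain ⟨hs, ht⟩ := Prod.ext_iff.1 (toLex.injective ((apply_eq s' t).symm.trans h))
    obtain rfl := θ_injective hs
    exact ⟨t, ht⟩
  refine ⟨θ_strictMono.orderIsoOfSurjective θ θ_surjective,
    fun s => (μ_strictMono s).orderIsoOfSurjective (μ s) (μ_surjective s), ?_⟩
  ext ⟨s, t⟩
  exact apply_eq s t

end Shear

section Fibre

theorem fst_ofLex_eq_of_le_of_le [PartialOrder α] [Preorder β] {s : α} {t t' : β} {p : α ×ₗ β}
    (h : toLex (s, t) ≤ p) (h' : p ≤ toLex (s, t')) : (ofLex p).1 = s :=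
  le_antisymm (Prod.Lex.monotone_fst_ofLex h') (Prod.Lex.monotone_fst_ofLex h)

theorem exists_lt_fst_eq_of_mem_Ioo [PartialOrder α] [Preorder β] [Preorder γ] [LinearOrder δ]
    [Nontrivial δ] (e : α ×ₗ β ≃o γ ×ₗ δ) {s : α} {t t' : β} {u : γ}
    (hu : u ∈ Ioo (ofLex (e (toLex (s, t)))).1 (ofLex (e (toLex (s, t')))).1) :
    ∃ x y : β, x < y ∧ (ofLex (e (toLex (s, x)))).1 = u ∧ (ofLex (e (toLex (s, y)))).1 = u := by
  obtain ⟨v, w, hvw⟩ := exists_pair_lt δ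
  have exists_apply_eq (z : δ) : ∃ x, e (toLex (s, x)) = toLex (u, z) := by
    obtain ⟨p, hp⟩ := e.surjective (toLex (u, z))
    have hsp : (ofLex p).1 = s := fst_ofLex_eq_of_le_of_le
      (e.le_iff_le.1 (Prod.Lex.le_iff.2 (.inl (by simpa [hp] using hu.1))))
      (e.le_iff_le.1 (Prod.Lex.le_iff.2 (.inl (by simpa [hp] using hu.2))))
    exact ⟨(ofLex p).2, by rw [← hsp]; exact hp⟩
  obtain ⟨x, hx⟩ := exists_apply_eq v
  obtain ⟨y, hy⟩ := exists_apply_eq w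
  have hxy : e (toLex (s, x)) < e (toLex (s, y)) := by
    rw [hx, hy]
    exact Prod.Lex.toLex_lt_toLex.2 (.inr ⟨rfl, hvw⟩)
  refine ⟨x, y, ?_, by simp [hx], by simp [hy]⟩
  simpa [Prod.Lex.toLex_lt_toLex] using hxy

variable [LinearOrder β] [LinearOrder γ] [LinearOrder δ] [TopologicalSpace β] [OrderTopology β]
  [SecondCountableTopology β]

theorem fst_apply_eq_of_fst_eq [PartialOrder α] [Nontrivial δ]
    (hγ : ∀ a b : γ, a < b → ¬(Ioo a b).Countable) (e : α ×ₗ β ≃o γ ×ₗ δ)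
    {p q : α ×ₗ β} (hpq : (ofLex p).1 = (ofLex q).1) : (ofLex (e p)).1 = (ofLex (e q)).1 := by
  obtain ⟨s, t⟩ := p
  obtain ⟨s', t'⟩ := q
  obtain rfl : s = s' := hpq
  let g : β → γ := fun t => (ofLex (e (toLex (s, t)))).1
  have hg : Monotone g := fun x y hxy =>
    Prod.Lex.monotone_fst_ofLex (e.monotone (Prod.Lex.toLex_mono ⟨le_rfl, hxy⟩))
  have g_not_lt (x y : β) : ¬g x < g y := fun hlt =>
    hγ _ _ hlt (hg.countable_setOfPred_two_preimages.mono fun _ hu =>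
      exists_lt_fst_eq_of_mem_Ioo e hu)
  exact le_antisymm (not_lt.1 (g_not_lt t' t)) (not_lt.1 (g_not_lt t t'))

theorem exists_eq_lexShear [LinearOrder α] [Nontrivial β] [Nontrivial δ] [TopologicalSpace δ]
    [OrderTopology δ] [SecondCountableTopology δ] (hα : ∀ a b : α, a < b → ¬(Ioo a b).Countable)
    (hγ : ∀ a b : γ, a < b → ¬(Ioo a b).Countable) (e : α ×ₗ β ≃o γ ×ₗ δ) :
    ∃ (θ : α ≃o γ) (μ : α → β ≃o δ), e = lexShear θ μ :=
  exists_eq_lexShear_of_fst_eq_iff e fun p q =>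
    ⟨fun h => by simpa using fst_apply_eq_of_fst_eq hα e.symm h, fst_apply_eq_of_fst_eq hγ e⟩

end Fibre

section UnitInterval

theorem not_countable_Ioo_of_ordConnected {s : Set ℝ} [OrdConnected s] {a b : s} (h : a < b) :
    ¬(Ioo a b).Countable := fun hc =>
  h.not_ge (by simpa using hc.image Subtype.val)

theorem lexLE_iff_toLex_le_toLex {p q : 𝕀 × 𝕀} : lexLE p q ↔ toLex p ≤ toLex q :=
  Prod.Lex.toLex_le_toLex.symm

theorem lexLT_iff_toLex_lt_toLex {p q : 𝕀 × 𝕀} : lexLT p q ↔ toLex p < toLex q :=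
  Prod.Lex.toLex_lt_toLex.symm

theorem orderTopology_lexTop : @OrderTopology (𝕀 ×ₗ 𝕀) lexTop _ := by
  refine @OrderTopology.mk (𝕀 ×ₗ 𝕀) lexTop _ (congrArg TopologicalSpace.generateFrom ?_)
  ext S
  simp only [lexLT_iff_toLex_lt_toLex]
  exact exists_or.symm

end UnitInterval

theorem lex_square_orderReversing_homeomorph_iff_general [LinearOrder α] [LinearOrder β]
    [LinearOrder γ] [LinearOrder δ] [TopologicalSpace α] [OrderTopology α] [TopologicalSpace β]
    [OrderTopology β] [TopologicalSpace γ] [OrderTopology γ] [TopologicalSpace δ] [OrderTopology δ]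
    [SecondCountableTopology β] [SecondCountableTopology δ] [Nontrivial β] [Nontrivial δ]
    [TopologicalSpace (α ×ₗ β)] [OrderTopology (α ×ₗ β)] [TopologicalSpace (γ ×ₗ δ)]
    [OrderTopology (γ ×ₗ δ)] (hα : ∀ a b : α, a < b → ¬(Ioo a b).Countable)
    (hγ : ∀ a b : γ, a < b → ¬(Ioo a b).Countable) (f : α ×ₗ β → γ ×ₗ δ) :
    ((∃ 𝔬 : α ×ₗ β ≃ₜ γ ×ₗ δ, ⇑𝔬 = f) ∧ Antitone f) ↔
      ∃ (θ : α ≃ₜ γ) (μ : α → β ≃ₜ δ), Antitone θ ∧ (∀ s, Antitone (μ s)) ∧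
        ∀ s t, f (toLex (s, t)) = toLex (θ s, μ s t) := by
  constructor
  · rintro ⟨⟨𝔬, rfl⟩, h𝔬⟩
    have hγ' (a b : γᵒᵈ) (hab : a < b) : ¬(Ioo a b).Countable := fun hc =>
      hγ (OrderDual.ofDual b) (OrderDual.ofDual a) hab
        (by simpa only [Ioo_ofDual] using hc.preimage OrderDual.toDual.injective)
    obtain ⟨θ, μ, hθμ⟩ := exists_eq_lexShear hα hγ'
      ((orderIsoDualOfAntitone 𝔬.toEquiv h𝔬).trans (lexProdDual γ δ))
    refine ⟨homeomorphOfOrderIsoDual θ, fun s => homeomorphOfOrderIsoDual (μ s),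
      antitone_homeomorphOfOrderIsoDual θ, fun s => antitone_homeomorphOfOrderIsoDual (μ s),
      fun s t => ?_⟩
    simpa [← (lexProdDual γ δ).eq_symm_apply] using DFunLike.congr_fun hθμ (toLex (s, t))
  · rintro ⟨θ, μ, hθ, hμ, hf⟩
    let e : α ×ₗ β ≃o (γ ×ₗ δ)ᵒᵈ :=
      (lexShear (orderIsoDualOfAntitone θ.toEquiv hθ)
        fun s => orderIsoDualOfAntitone (μ s).toEquiv (hμ s)).trans (lexProdDual γ δ).symm
    have he : ⇑(homeomorphOfOrderIsoDual e) = f := by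
      ext ⟨s, t⟩
      exact (hf s t).symm
    exact ⟨⟨_, he⟩, he ▸ antitone_homeomorphOfOrderIsoDual e⟩

/-- `f` is an order-reversing self-homeomorphism of the lexicographically ordered
square iff there are an order-reversing homeomorphism `θ` of `[0,1]` (with its
Euclidean topology) and a family `μ` of order-reversing homeomorphisms of `[0,1]`
with `f (s,t) = (θ s, μ s t)`. -/
theorem lex_square_orderReversing_homeomorph_iff (f : 𝕀 × 𝕀 → 𝕀 × 𝕀) :
    ((∃ 𝔬 : @Homeomorph (𝕀 × 𝕀) (𝕀 × 𝕀) lexTop lexTop, ⇑𝔬 = f) ∧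
      ∀ x y, lexLE x y → lexLE (f y) (f x)) ↔
    (∃ (θ : 𝕀 ≃ₜ 𝕀) (μ : 𝕀 → 𝕀 ≃ₜ 𝕀), Antitone ⇑θ ∧ (∀ s : 𝕀, Antitone ⇑(μ s)) ∧
      ∀ s t : 𝕀, f (s, t) = (θ s, μ s t)) := by
  let : TopologicalSpace (𝕀 ×ₗ 𝕀) := lexTop
  have : OrderTopology (𝕀 ×ₗ 𝕀) := orderTopology_lexTop
  simp only [lexLE_iff_toLex_le_toLex]
  exact lex_square_orderReversing_homeomorph_iff_general
    (fun _ _ => not_countable_Ioo_of_ordConnected) (fun _ _ => not_countable_Ioo_of_ordConnected) f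
end

section
/- Let p, q : I → I be homeomorphisms of the unit interval. The product map p × q : 𝔸 → 𝔸, (s,t) ↦ (p(s), q(t)), is a homeomorphism of the Alexandroff square if and only if p = q. -/
open Set

/-- The unit interval `[0,1]` with its Euclidean (subspace) topology. -/
local notation "𝕀" => unitInterval

/-- The generating family for the Alexandroff square topology on `[0,1] × [0,1]`:
sets `{x} × U` with `U` open in `𝕀` and `x ∉ U`, together with sets
`([0,1] × U) \ (F × [0,1])` with `U` open in `𝕀` and `F` finite. -/
def alexBasis : Set (Set (𝕀 × 𝕀)) :=
  {S | (∃ (x : 𝕀) (U : Set 𝕀), IsOpen U ∧ x ∉ U ∧ S = ({x} : Set 𝕀) ×ˢ U) ∨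
       (∃ (U F : Set 𝕀), IsOpen U ∧ F.Finite ∧ S = ((univ : Set 𝕀) ×ˢ U) \ (F ×ˢ (univ : Set 𝕀)))}

/-- The Alexandroff square topology. -/
def alexTop : TopologicalSpace (𝕀 × 𝕀) := TopologicalSpace.generateFrom alexBasis

/-!
Along the horizontal line at height `s`, all but finitely many points lie in any given
neighbourhood of the diagonal point `(s, s)`, whereas in the square of a T₁ space an off-diagonal
point `(x, y)` has neighbourhoods contained in the column over `x`. So a continuous `p × q` cannot
move `(s, s)` off the diagonal: it would send infinitely many columns into one, although `p` is
injective. Without separation axioms this argument yields `p s ⤳ q s`; applied to the inverse map,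
it yields `q s ⤳ p s`, and in a T₀ space the two together give `p s = q s`.
-/

open Filter Topology

/-- The Alexandroff square of an arbitrary space `X`. It is a type synonym of `X × X`, so that its
topology does not clash with the product topology. -/
def AlexandroffSquare (X : Type*) : Type _ := X × X

variable {X Y : Type*}

namespace AlexandroffSquare

variable [TopologicalSpace X] [TopologicalSpace Y]

/-- The Alexandroff topology on the square of `X`, generated by the same two families of sets as
`alexTop`, so that the two agree definitionally for `X = [0,1]`. -/
instance : TopologicalSpace (AlexandroffSquare X) :=
  .generateFrom {S : Set (X × X) |
    (∃ (x : X) (U : Set X), IsOpen U ∧ x ∉ U ∧ S = {x} ×ˢ U) ∨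
    (∃ U F : Set X, IsOpen U ∧ F.Finite ∧ S = (univ ×ˢ U) \ (F ×ˢ univ))}

theorem isOpen_singleton_prod {x : X} {U : Set X} (hU : IsOpen U) (hx : x ∉ U) :
    IsOpen (X := AlexandroffSquare X) ({x} ×ˢ U) :=
  .basic _ (.inl ⟨x, U, hU, hx, rfl⟩)

theorem isOpen_prod_of_disjoint {A U : Set X} (hU : IsOpen U) (hAU : Disjoint A U) :
    IsOpen (X := AlexandroffSquare X) (A ×ˢ U) := by
  rw [← biUnion_of_singleton A, iUnion₂_prod_const]
  exact isOpen_biUnion (X := AlexandroffSquare X) fun a ha =>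
    isOpen_singleton_prod hU (disjoint_left.mp hAU ha)

theorem isOpen_univ_prod_diff {U F : Set X} (hU : IsOpen U) (hF : F.Finite) :
    IsOpen (X := AlexandroffSquare X) ((univ ×ˢ U) \ (F ×ˢ univ)) :=
  .basic _ (.inr ⟨U, F, hU, hF, rfl⟩)

theorem tendsto_mk_cofinite_nhds_diag (s : X) :
    Tendsto (β := AlexandroffSquare X) (fun t => (t, s)) cofinite (𝓝 (s, s)) := by
  refine TopologicalSpace.tendsto_nhds_generateFrom_iff.mpr ?_
  rintro _ (⟨x, U, -, hxU, rfl⟩ | ⟨U, F, -, hF, rfl⟩) hs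
  · obtain ⟨rfl, hsU⟩ : s = x ∧ s ∈ U := hs
    exact absurd hsU hxU
  · filter_upwards [hF.compl_mem_cofinite] with t ht
    exact ⟨⟨mem_univ t, hs.1.2⟩, fun h => ht h.1⟩

theorem continuous_prodMap_self {p : X → Y} (hp : Continuous p)
    (hfin : Tendsto p cofinite cofinite) :
    Continuous (X := AlexandroffSquare X) (Y := AlexandroffSquare Y) (Prod.map p p) := by
  refine continuous_generateFrom_iff.mpr ?_
  rintro _ (⟨y, U, hU, hyU, rfl⟩ | ⟨U, F, hU, hF, rfl⟩)
  · exact isOpen_prod_of_disjoint (hU.preimage hp)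
      ((disjoint_singleton_left.mpr hyU).preimage p)
  · have hpF : (p ⁻¹' F).Finite := by
      simpa using hfin hF.compl_mem_cofinite
    exact isOpen_univ_prod_diff (hU.preimage hp) hpF

theorem specializes_of_continuousAt_prodMap {p q : X → Y} {s : X}
    (hpq : ContinuousAt (X := AlexandroffSquare X) (Y := AlexandroffSquare Y)
      (Prod.map p q) (s, s))
    (hp : ∃ᶠ t in cofinite, p t ≠ p s) : p s ⤳ q s := by
  refine specializes_iff_forall_open.mpr fun U hU hqU => ?_
  by_contra hpU
  have hlim : Tendsto (β := AlexandroffSquare Y) (fun t => (p t, q s)) cofinite (𝓝 (p s, q s)) :=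
    hpq.tendsto.comp (tendsto_mk_cofinite_nhds_diag s)
  have hcolumn : ∀ᶠ t in cofinite, p t = p s :=
    (hlim.eventually_mem ((isOpen_singleton_prod hU hpU).mem_nhds ⟨rfl, hqU⟩)).mono
      fun _ ht => ht.1
  obtain ⟨t, hne, heq⟩ := (hp.and_eventually hcolumn).exists
  exact hne heq

theorem specializes_of_coe_eq_prodMap [Infinite X] {p q : X ≃ₜ Y}
    {h : AlexandroffSquare X ≃ₜ AlexandroffSquare Y} (hpq : ⇑h = Prod.map p q) (s : X) :
    p s ⤳ q s :=
  specializes_of_continuousAt_prodMap (hpq ▸ h.continuous.continuousAt)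
    ((eventually_cofinite_ne s).mono fun _ => p.injective.ne).frequently

theorem symm_coe_eq_prodMap {p q : X ≃ₜ Y}
    {h : AlexandroffSquare X ≃ₜ AlexandroffSquare Y} (hpq : ⇑h = Prod.map p q) :
    ⇑h.symm = Prod.map p.symm q.symm := by
  refine funext fun z => h.symm_apply_eq.mpr ?_
  rw [hpq]
  exact Prod.ext (p.apply_symm_apply z.1).symm (q.apply_symm_apply z.2).symm

theorem inseparable_of_coe_eq_prodMap [Infinite X] {p q : X ≃ₜ Y}
    {h : AlexandroffSquare X ≃ₜ AlexandroffSquare Y} (hpq : ⇑h = Prod.map p q) (s : X) :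
    Inseparable (p s) (q s) := by
  have : Infinite Y := p.toEquiv.infinite_iff.mp ‹_›
  have hsymm : p.symm (p s) ⤳ q.symm (p s) :=
    specializes_of_coe_eq_prodMap (symm_coe_eq_prodMap hpq) (p s)
  have hqp : q s ⤳ p s := by simpa using hsymm.map q.continuous
  exact (specializes_of_coe_eq_prodMap hpq s).antisymm hqp

/-- The homeomorphism `p × p` of Alexandroff squares induced by a homeomorphism `p`. -/
def prodMapHomeomorph (p : X ≃ₜ Y) : AlexandroffSquare X ≃ₜ AlexandroffSquare Y where
  toEquiv := p.toEquiv.prodCongr p.toEquiv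
  continuous_toFun := continuous_prodMap_self p.continuous p.injective.tendsto_cofinite
  continuous_invFun := continuous_prodMap_self p.symm.continuous p.symm.injective.tendsto_cofinite

end AlexandroffSquare

open AlexandroffSquare in
theorem alexandroff_prodMap_homeomorph_iff_general [TopologicalSpace X] [TopologicalSpace Y]
    [Infinite X] [T0Space Y] (p q : X ≃ₜ Y) :
    (∃ h : AlexandroffSquare X ≃ₜ AlexandroffSquare Y, ⇑h = Prod.map p q) ↔ p = q := by
  constructor
  · rintro ⟨h, hpq⟩
    exact Homeomorph.ext fun s => (inseparable_of_coe_eq_prodMap hpq s).eq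
  · rintro rfl
    exact ⟨prodMapHomeomorph p, rfl⟩

/-- For homeomorphisms `p q` of `[0,1]` (Euclidean topology), the product map
`(s,t) ↦ (p s, q t)` is a self-homeomorphism of the Alexandroff square iff `p = q`. -/
theorem alexandroff_prodMap_homeomorph_iff (p q : 𝕀 ≃ₜ 𝕀) :
    (∃ 𝔥 : @Homeomorph (𝕀 × 𝕀) (𝕀 × 𝕀) alexTop alexTop,
        ⇑𝔥 = fun st : 𝕀 × 𝕀 => (p st.1, q st.2)) ↔ p = q := by
  have : Infinite 𝕀 := Icc.infinite zero_lt_one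
  exact alexandroff_prodMap_homeomorph_iff_general p q
end
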